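/- Let F be a field, let n ≥ 2, and let S be a finite generating system of the full matrix algebra M_n(F). If S contains a matrix whose minimal polynomial has degree n − 1, then ℓ(S) ≤ 2n − 2. -/

import Mathlib

open Polynomial Matrix

/-- The `F`-linear span of all words over `S` of length at most `i`
(the empty word being `1`). -/
def wordSpan (F : Type*) {A : Type*} [Field F] [Ring A] [Algebra F A]
    (S : Set A) (i : ℕ) : Submodule F A :=
  Submodule.span F {x : A | ∃ l : List A, l.length ≤ i ∧ (∀ a ∈ l, a ∈ S) ∧ l.prod = x}

/-- `S` is a generating system of the algebra `A`:
`A` is the union of the subspaces `wordSpan F S i`. -/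
def IsGeneratingSystem (F : Type*) {A : Type*} [Field F] [Ring A] [Algebra F A]
    (S : Set A) : Prop :=
  ∀ x : A, ∃ i : ℕ, x ∈ wordSpan F S i

/-- The length of a generating system `S`: the least `k` with `wordSpan F S k = ⊤`. -/
noncomputable def genLength (F : Type*) {A : Type*} [Field F] [Ring A] [Algebra F A]
    (S : Set A) : ℕ :=
  sInf {k : ℕ | wordSpan F S k = ⊤}

open Module

/-!
If the words of length at most `2n - 2` do not span, then after passing to an algebraic closure
there is `Y ≠ 0` that is trace-orthogonal to all of them. Words of length at most `n - 1` move any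
nonzero vector through the whole space, so a nonzero operator orthogonal to them has rank at
least `2`. Let `a ∈ S` have minimal polynomial `m`. Multiplying `Y` by linear factors of `m(a)` for
as long as the product is nonzero preserves enough orthogonality, and the last nonzero product has
rank at least `2` and is killed by some `a - c`: at this factor, the rank of a partial product of
`m(a)` drops by at least `2`. All `deg m` factors make the rank drop by at least `1`, and the drops
sum to `n`. So `deg m = n` is impossible, and when `deg m = n - 1` all the excess sits at a single
eigenvalue `c` with a two-dimensional eigenspace. Then `Y` and all `B * Y` with `B ∈ S` have range
inside this eigenspace, so the range of `Y` is the eigenspace and is invariant under `S`; hence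
`n = 2`, and a non-scalar element of `S` reduces to the case `deg m = n`.
-/

section WordSpan

variable {F A : Type*} [Field F] [Ring A] [Algebra F A] {S : Set A}

lemma wordSpan_mono : Monotone (wordSpan F S) := fun _ _ hij ↦
  Submodule.span_mono fun _ ⟨l, hl, hlS, hx⟩ ↦ ⟨l, hl.trans hij, hlS, hx⟩

lemma one_mem_wordSpan (i : ℕ) : (1 : A) ∈ wordSpan F S i :=
  Submodule.subset_span ⟨[], by simp⟩

lemma mem_wordSpan_one {a : A} (ha : a ∈ S) : a ∈ wordSpan F S 1 :=
  Submodule.subset_span ⟨[a], by simp [ha]⟩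

lemma mul_mem_wordSpan {x y : A} {i j : ℕ} (hx : x ∈ wordSpan F S i) (hy : y ∈ wordSpan F S j) :
    x * y ∈ wordSpan F S (i + j) := by
  refine Submodule.mul_le.1 ?_ x hx y hy
  rw [wordSpan, wordSpan, Submodule.span_mul_span]
  refine Submodule.span_mono ?_
  rintro _ ⟨_, ⟨l, hl, hlS, rfl⟩, _, ⟨l', hl', hlS', rfl⟩, rfl⟩
  refine ⟨l ++ l', by grind, fun a ha ↦ ?_, List.prod_append⟩
  exact (List.mem_append.1 ha).elim (hlS a) (hlS' a)

lemma pow_mem_wordSpan {a : A} (ha : a ∈ S) (i : ℕ) : a ^ i ∈ wordSpan F S i := by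
  induction i with
  | zero => simpa using one_mem_wordSpan 0
  | succ i ih => simpa [pow_succ] using mul_mem_wordSpan ih (mem_wordSpan_one ha)

lemma aeval_mem_wordSpan {a : A} (ha : a ∈ S) (p : F[X]) :
    aeval a p ∈ wordSpan F S p.natDegree := by
  rw [aeval_eq_sum_range]
  exact Submodule.sum_mem _ fun i hi ↦ Submodule.smul_mem _ _ <|
    wordSpan_mono (Finset.mem_range_succ_iff.1 hi) (pow_mem_wordSpan ha i)

lemma wordSpan_le_adjoin (i : ℕ) : wordSpan F S i ≤ (Algebra.adjoin F S).toSubmodule := by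
  refine Submodule.span_le.2 ?_
  rintro _ ⟨l, -, hlS, rfl⟩
  exact Subalgebra.list_prod_mem _ fun a ha ↦ Algebra.subset_adjoin (hlS a ha)

lemma IsGeneratingSystem.adjoin_eq_top (hS : IsGeneratingSystem F S) :
    Algebra.adjoin F S = ⊤ :=
  eq_top_iff.2 fun x _ ↦ (hS x).elim fun i hi ↦ wordSpan_le_adjoin i hi

end WordSpan

section BaseChange

open TensorProduct

section CommRing

variable {R K : Type*} [CommRing R] [CommRing K] [Algebra R K]

section Module

variable {M N : Type*} [AddCommGroup M] [Module R M] [AddCommGroup N] [Module R N] [Module K N]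
  [IsScalarTower R K N] {g : M →ₗ[R] N}

lemma linearIndependent_comp_of_isBaseChange [Flat R K] (hg : IsBaseChange K g) {ι : Type*}
    {v : ι → M} (hv : LinearIndependent R v) : LinearIndependent K (g ∘ v) := by
  have h := (Flat.linearIndependent_one_tmul (S := K) hv).map' hg.equiv.toLinearMap hg.equiv.ker
  simpa [Function.comp_def, hg.equiv_tmul] using h

lemma span_range_of_isBaseChange (hg : IsBaseChange K g) :
    Submodule.span K (Set.range g) = ⊤ :=
  eq_top_iff.2 fun x _ ↦ hg.inductionOn x (· ∈ Submodule.span K (Set.range g)) (zero_mem _)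
    (fun m ↦ Submodule.subset_span ⟨m, rfl⟩) (fun c _ ↦ Submodule.smul_mem _ c)
    fun _ _ ↦ add_mem

end Module

lemma adjoin_image_eq_top_of_isBaseChange {A B : Type*} [Ring A] [Algebra R A] [Ring B]
    [Algebra R B] [Algebra K B] [IsScalarTower R K B] {f : A →ₐ[R] B}
    (hf : IsBaseChange K f.toLinearMap) {S : Set A} (hS : Algebra.adjoin R S = ⊤) :
    Algebra.adjoin K (f '' S) = ⊤ := by
  have hle : Algebra.adjoin R S ≤ ((Algebra.adjoin K (f '' S)).restrictScalars R).comap f :=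
    Algebra.adjoin_le fun a ha ↦ Algebra.subset_adjoin ⟨a, ha, rfl⟩
  rw [← Algebra.toSubmodule_eq_top, eq_top_iff, ← span_range_of_isBaseChange hf,
    Submodule.span_le]
  rintro _ ⟨a, rfl⟩
  exact hle (hS ▸ Algebra.mem_top)

lemma isBaseChange_ofId_mapMatrix (R K ι : Type*) [CommRing R] [CommRing K] [Algebra R K]
    [Fintype ι] [DecidableEq ι] :
    IsBaseChange K ((Algebra.ofId R K).mapMatrix : Matrix ι ι R →ₐ[R] Matrix ι ι K).toLinearMap :=
  ((IsBaseChange.linearMap R K).finitePow ι).finitePow ι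

end CommRing

variable {F K : Type*} [Field F] [Field K] [Algebra F K]

lemma eq_top_of_span_image_eq_top {M N : Type*} [AddCommGroup M] [Module F M] [AddCommGroup N]
    [Module F N] [Module K N] [IsScalarTower F K N] {g : M →ₗ[F] N} (hg : IsBaseChange K g)
    {W : Submodule F M} (hW : Submodule.span K (g '' W) = ⊤) : W = ⊤ := by
  by_contra hne
  obtain ⟨φ, hφ, hφW⟩ := Submodule.exists_le_ker_of_lt_top W (lt_top_iff_ne_top.2 hne)
  let ψ : N →ₗ[K] K := hg.lift (Algebra.linearMap F K ∘ₗ φ)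
  have hψ (x : M) : ψ (g x) = algebraMap F K (φ x) := hg.lift_eq _ x
  have hψ_zero : ψ = 0 := by
    refine LinearMap.ext_on hW ?_
    rintro _ ⟨w, hw, rfl⟩
    rw [hψ, hφW hw, map_zero, LinearMap.zero_apply]
  refine hφ (LinearMap.ext fun x ↦ (algebraMap F K).injective ?_)
  rw [← hψ, hψ_zero, LinearMap.zero_apply, LinearMap.zero_apply, map_zero]

variable {A B : Type*} [Ring A] [Algebra F A] [Ring B] [Algebra F B] [Algebra K B]
  [IsScalarTower F K B] {f : A →ₐ[F] B}

lemma natDegree_minpoly_le_of_isBaseChange (hf : IsBaseChange K f.toLinearMap) (a : A)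
    (ha : IsIntegral K (f a)) : (minpoly F a).natDegree ≤ (minpoly K (f a)).natDegree := by
  set p := minpoly K (f a)
  by_contra! hlt
  have hind : LinearIndependent K fun i : Fin (minpoly F a).natDegree ↦ f a ^ (i : ℕ) := by
    simpa [Function.comp_def] using
      linearIndependent_comp_of_isBaseChange hf (linearIndependent_pow a)
  have hsum : ∑ i : Fin (minpoly F a).natDegree, p.coeff i • f a ^ (i : ℕ) = 0 := by
    rw [Fin.sum_univ_eq_sum_range (fun i ↦ p.coeff i • f a ^ i), ← aeval_eq_sum_range' hlt]
    exact minpoly.aeval K (f a)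
  have hlead := Fintype.linearIndependent_iff.1 hind _ hsum ⟨p.natDegree, hlt⟩
  exact minpoly.ne_zero ha (leadingCoeff_eq_zero.1 hlead)

variable (f) in
lemma wordSpan_image (S : Set A) (i : ℕ) :
    wordSpan K (f '' S) i = Submodule.span K (f '' wordSpan F S i) := by
  have himage : f '' (wordSpan F S i) = (wordSpan F S i).map f.toLinearMap := rfl
  rw [himage, wordSpan, wordSpan, Submodule.map_span, Submodule.span_span_of_tower]
  congr 1
  ext y
  constructor
  · rintro ⟨l, hl, hlS, rfl⟩
    choose! g hgS hg using hlS
    refine ⟨(l.map g).prod, ⟨l.map g, by simpa, by simpa using hgS, rfl⟩, ?_⟩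
    refine (map_list_prod f _).trans ?_
    rw [List.map_map, List.map_congr_left (f := f ∘ g) (g := id) hg, List.map_id]
  · rintro ⟨_, ⟨l, hl, hlS, rfl⟩, rfl⟩
    have hmem : ∀ b ∈ l.map f, b ∈ f '' S := by simpa using fun a ha ↦ ⟨a, hlS a ha, rfl⟩
    exact ⟨l.map f, by simpa, hmem, (map_list_prod f l).symm⟩

lemma wordSpan_eq_top_of_image (hf : IsBaseChange K f.toLinearMap) {S : Set A} {i : ℕ}
    (h : wordSpan K (f '' S) i = ⊤) : wordSpan F S i = ⊤ :=
  eq_top_of_span_image_eq_top hf (wordSpan_image (K := K) f S i ▸ h)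

end BaseChange

section LinearAlgebra

variable {K V W : Type*} [Field K] [AddCommGroup V] [Module K V] [AddCommGroup W] [Module K W]

lemma finrank_range_comp_add_finrank_inf_ker {U : Type*} [AddCommGroup U] [Module K U]
    [FiniteDimensional K V] (B : V →ₗ[K] W) (A : U →ₗ[K] V) :
    finrank K (LinearMap.range (B ∘ₗ A)) +
      finrank K (LinearMap.range A ⊓ LinearMap.ker B : Submodule K V) =
        finrank K (LinearMap.range A) := by
  rw [← LinearMap.finrank_range_add_finrank_ker (B.domRestrict (LinearMap.range A)),
    LinearMap.range_domRestrict, LinearMap.range_comp, LinearMap.ker_domRestrict,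
    ← Submodule.map_comap_subtype, Submodule.finrank_map_subtype_eq]

lemma exists_eq_smulRight_of_finrank_range_le_one [FiniteDimensional K W] {X : V →ₗ[K] W}
    (hX : finrank K (LinearMap.range X) ≤ 1) : ∃ (ψ : Dual K V) (w : W), X = ψ.smulRight w := by
  obtain ⟨w, hw⟩ := ((LinearMap.range X).finrank_le_one_iff_isPrincipal.1 hX).principal
  rcases eq_or_ne w 0 with rfl | hw₀
  · have hX₀ : X = 0 := LinearMap.range_eq_bot.1 (hw.trans (Submodule.span_zero_singleton K))
    exact ⟨0, 0, by simp [hX₀]⟩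
  · let X' : V →ₗ[K] K ∙ w := X.codRestrict (K ∙ w) fun v ↦ hw ▸ LinearMap.mem_range_self X v
    refine ⟨LinearEquiv.coord K W w hw₀ ∘ₗ X', w, LinearMap.ext fun v ↦ ?_⟩
    exact (LinearEquiv.coord_apply_smul K W w hw₀ (X' v)).symm

end LinearAlgebra

section MinimalPolynomial

lemma exists_mul_X_sub_C_dvd_of_aeval_mul_eq_zero {K A : Type*} [Field K] [Ring A] [Algebra K A]
    {a x : A} {h : K[X]} (hs : h.Splits) (h₀ : h ≠ 0) (hx : x ≠ 0) (hax : aeval a h * x = 0) :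
    ∃ (g : K[X]) (c : K), g * (X - C c) ∣ h ∧ aeval a g * x ≠ 0 ∧
      aeval a (X - C c) * (aeval a g * x) = 0 := by
  suffices H : ∀ s : Multiset K, aeval a (s.map (X - C ·)).prod * x = 0 →
      ∃ (g : K[X]) (c : K), g * (X - C c) ∣ (s.map (X - C ·)).prod ∧ aeval a g * x ≠ 0 ∧
        aeval a (X - C c) * (aeval a g * x) = 0 by
    rw [hs.eq_prod_roots, map_mul, aeval_C, ← Algebra.smul_def, smul_mul_assoc, smul_eq_zero] at hax
    obtain ⟨g, c, hdvd, hg⟩ := H _ (hax.resolve_left (leadingCoeff_ne_zero.2 h₀))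
    exact ⟨g, c, hs.eq_prod_roots ▸ hdvd.mul_left _, hg⟩
  intro s hsx
  induction s using Multiset.induction_on with
  | empty => simp [hx] at hsx
  | cons c s ih =>
    rw [Multiset.map_cons, Multiset.prod_cons] at hsx ⊢
    by_cases hzero : aeval a (s.map (X - C ·)).prod * x = 0
    · obtain ⟨g, c', hdvd, hg⟩ := ih hzero
      exact ⟨g, c', hdvd.mul_left _, hg⟩
    · exact ⟨_, c, (mul_comm _ _).dvd, hzero, by rwa [← mul_assoc, ← map_mul]⟩

variable {K V : Type*} [Field K] [AddCommGroup V] [Module K V] {a : End K V} {f g : K[X]}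

lemma aeval_restrict_coe {U : Submodule K V} (hU : ∀ u ∈ U, a u ∈ U) (p : K[X]) (u : U) :
    (aeval (a.restrict hU) p u : V) = aeval a p u := by
  induction p using Polynomial.induction_on' with
  | add p q hp hq => simp [hp, hq]
  | monomial n c => simp [aeval_monomial, Module.End.pow_restrict n hU, LinearMap.restrict_apply]

variable [FiniteDimensional K V]

-- The characteristic polynomial of `a` restricted to the range of `f(a)` is a multiple of `g`.
lemma natDegree_le_finrank_range_aeval (h : minpoly K a = f * g) :
    g.natDegree ≤ finrank K (LinearMap.range (aeval a f)) := by
  have hcomm : Commute (aeval a f) a := by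
    simpa using (Commute.all f X).map (aeval a)
  have hU : ∀ u ∈ LinearMap.range (aeval a f), a u ∈ LinearMap.range (aeval a f) := by
    rintro _ ⟨v, rfl⟩
    exact ⟨a v, congr($(hcomm.eq) v)⟩
  let χ := (a.restrict hU).charpoly
  have hχ : aeval a (χ * f) = 0 := by
    ext v
    have hv := congr(($(LinearMap.aeval_self_charpoly (a.restrict hU)) ⟨aeval a f v, v, rfl⟩ : V))
    rw [aeval_restrict_coe] at hv
    simpa using hv
  have hfg : f * g ≠ 0 := h ▸ minpoly.ne_zero (Algebra.IsIntegral.isIntegral a)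
  have hdvd : f * g ∣ f * χ := h ▸ mul_comm χ f ▸ minpoly.dvd K a hχ
  have hgχ : g ∣ χ := (mul_dvd_mul_iff_left (left_ne_zero_of_mul hfg)).1 hdvd
  have hχ₀ : χ ≠ 0 := (LinearMap.charpoly_monic _).ne_zero
  exact (natDegree_le_of_dvd hgχ hχ₀).trans_eq (LinearMap.charpoly_natDegree _)

lemma finrank_range_aeval_mul_add (f g : K[X]) :
    finrank K (LinearMap.range (aeval a (f * g))) +
      finrank K (LinearMap.range (aeval a f) ⊓ LinearMap.ker (aeval a g) : Submodule K V) =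
        finrank K (LinearMap.range (aeval a f)) := by
  rw [mul_comm, map_mul]
  exact finrank_range_comp_add_finrank_inf_ker _ _

lemma finrank_range_aeval_mul_add_natDegree_le (h : f * g ∣ minpoly K a) :
    finrank K (LinearMap.range (aeval a (f * g))) + g.natDegree ≤
      finrank K (LinearMap.range (aeval a f)) := by
  obtain ⟨q, hq⟩ := h
  have hle : LinearMap.range (aeval a (f * q)) ≤
      LinearMap.range (aeval a f) ⊓ LinearMap.ker (aeval a g) := by
    rintro _ ⟨v, rfl⟩
    refine ⟨⟨aeval a q v, by simp⟩, ?_⟩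
    have hzero : aeval a (g * (f * q)) v = 0 := by
      rw [show g * (f * q) = minpoly K a by rw [hq]; ring, minpoly.aeval, LinearMap.zero_apply]
    simpa using hzero
  have hdeg := natDegree_le_finrank_range_aeval (a := a) (f := f * q) (g := g) (by rw [hq]; ring)
  linarith [Submodule.finrank_mono hle, finrank_range_aeval_mul_add (a := a) f g]

lemma natDegree_minpoly_le_finrank (a : End K V) : (minpoly K a).natDegree ≤ finrank K V := by
  have hrank := finrank_range_aeval_mul_add_natDegree_le (a := a) (one_mul (minpoly K a)).dvd
  exact le_of_add_le_right (hrank.trans (Submodule.finrank_le _))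

lemma natDegree_minpoly_add_finrank_range_inf_ker_le (h : f * g ∣ minpoly K a) :
    (minpoly K a).natDegree +
      finrank K (LinearMap.range (aeval a f) ⊓ LinearMap.ker (aeval a g) : Submodule K V) ≤
        finrank K (LinearMap.range (aeval a f)) + (f * g).natDegree := by
  obtain ⟨q, hq⟩ := h
  have hdeg : (minpoly K a).natDegree = (f * g).natDegree + q.natDegree := by
    have hm₀ : f * g * q ≠ 0 := hq ▸ minpoly.ne_zero (Algebra.IsIntegral.isIntegral a)
    rw [hq, natDegree_mul (left_ne_zero_of_mul hm₀) (right_ne_zero_of_mul hm₀)]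
  linarith [natDegree_le_finrank_range_aeval hq, finrank_range_aeval_mul_add (a := a) f g]

end MinimalPolynomial

section TraceForm

variable (K V : Type*) [Field K] [AddCommGroup V] [Module K V]

/-- The bilinear form `(X, Y) ↦ tr (X * Y)` on the endomorphism algebra. -/
noncomputable def endTraceForm : LinearMap.BilinForm K (End K V) :=
  (LinearMap.mul K (End K V)).compr₂ (LinearMap.trace K V)

variable {K V}

lemma endTraceForm_apply (X Y : End K V) :
    endTraceForm K V X Y = LinearMap.trace K V (X * Y) := rfl

lemma endTraceForm_smulRight [FiniteDimensional K V] (X : End K V) (ψ : Dual K V) (v : V) :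
    endTraceForm K V X (ψ.smulRight v) = ψ (X v) := by
  have hmul : X * ψ.smulRight v = ψ.smulRight (X v) := by ext u; simp
  rw [endTraceForm_apply, hmul, LinearMap.trace_smulRight]

lemma endTraceForm_nondegenerate [FiniteDimensional K V] : (endTraceForm K V).Nondegenerate := by
  have hsymm : (endTraceForm K V).IsSymm := ⟨fun X Y ↦ LinearMap.trace_mul_comm K X Y⟩
  refine hsymm.isRefl.nondegenerate_iff_separatingLeft.2 fun X hX ↦ LinearMap.ext fun v ↦ ?_
  refine (forall_dual_apply_eq_zero_iff K (X v)).1 fun ψ ↦ ?_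
  rw [← endTraceForm_smulRight, hX]

lemma eq_top_of_orthogonal_endTraceForm_eq_bot [FiniteDimensional K V]
    {W : Submodule K (End K V)} (hW : (endTraceForm K V).orthogonal W = ⊥) : W = ⊤ := by
  have hrank := LinearMap.BilinForm.finrank_orthogonal endTraceForm_nondegenerate W
  rw [hW, finrank_bot] at hrank
  exact Submodule.eq_top_of_finrank_eq (W.finrank_le.antisymm (by lia))

end TraceForm

section Operators

variable {K V : Type*} [Field K] [AddCommGroup V] [Module K V] {S : Set (End K V)}

/-- The endomorphisms that are orthogonal, with respect to the trace form, to all words over `S`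
of length at most `k`. -/
noncomputable def wordPerp (S : Set (End K V)) (k : ℕ) : Submodule K (End K V) :=
  (endTraceForm K V).orthogonal (wordSpan K S k)

lemma mem_wordPerp {k : ℕ} {X : End K V} :
    X ∈ wordPerp S k ↔ ∀ T ∈ wordSpan K S k, endTraceForm K V T X = 0 := Iff.rfl

lemma wordPerp_antitone : Antitone (wordPerp S) := fun _ _ hij _ hX _ hT ↦
  hX _ (wordSpan_mono hij hT)

lemma mul_mem_wordPerp {j k : ℕ} {T X : End K V} (hT : T ∈ wordSpan K S j)
    (hX : X ∈ wordPerp S (k + j)) : T * X ∈ wordPerp S k := by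
  refine mem_wordPerp.2 fun U hU ↦ ?_
  rw [endTraceForm_apply, ← mul_assoc]
  exact mem_wordPerp.1 hX _ (mul_mem_wordSpan hU hT)

lemma eq_bot_or_eq_top_of_forall_mem_invtSubmodule (hS : Algebra.adjoin K S = ⊤)
    {U : Submodule K V} (hU : ∀ T ∈ S, U ∈ T.invtSubmodule) : U = ⊥ ∨ U = ⊤ := by
  rcases subsingleton_or_nontrivial V with _ | _
  · exact Or.inl (Subsingleton.elim _ _)
  have hall (T : End K V) : ∀ u ∈ U, T u ∈ U := by
    have hT : T ∈ Algebra.adjoin K S := hS ▸ Algebra.mem_top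
    induction hT using Algebra.adjoin_induction with
    | mem T hT => exact hU T hT
    | algebraMap c => exact fun u ↦ U.smul_mem c
    | add _ _ _ _ h h' => exact fun u hu ↦ U.add_mem (h u hu) (h' u hu)
    | mul _ _ _ _ h h' => exact fun u hu ↦ h _ (h' u hu)
  let U' : Submodule (End K V) V := { U with smul_mem' := fun T u ↦ hall T u }
  refine (eq_bot_or_eq_top U').imp (fun h ↦ ?_) (fun h ↦ ?_) <;>
    exact SetLike.ext fun v ↦ SetLike.ext_iff.1 h v

/-- The subspace of `V` spanned by the images of `x` under the words over `S` of length at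
most `k`. -/
def wordOrbit (S : Set (End K V)) (x : V) (k : ℕ) : Submodule K V :=
  (wordSpan K S k).map (LinearMap.applyₗ x)

lemma wordOrbit_mono (x : V) : Monotone (wordOrbit S x) := fun _ _ hij ↦
  Submodule.map_mono (wordSpan_mono hij)

lemma self_mem_wordOrbit (x : V) (k : ℕ) : x ∈ wordOrbit S x k :=
  ⟨1, one_mem_wordSpan k, rfl⟩

lemma apply_mem_wordOrbit_succ {T : End K V} (hT : T ∈ S) {x u : V} {k : ℕ}
    (hu : u ∈ wordOrbit S x k) : T u ∈ wordOrbit S x (k + 1) := by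
  obtain ⟨W, hW, rfl⟩ := hu
  exact ⟨T * W, add_comm 1 k ▸ mul_mem_wordSpan (mem_wordSpan_one hT) hW, rfl⟩

lemma wordOrbit_eq_top_of_eq_succ (hS : Algebra.adjoin K S = ⊤) {x : V} (hx : x ≠ 0) {k : ℕ}
    (h : wordOrbit S x k = wordOrbit S x (k + 1)) : wordOrbit S x k = ⊤ := by
  refine (eq_bot_or_eq_top_of_forall_mem_invtSubmodule hS fun T hT u hu ↦ ?_).resolve_left ?_
  · exact Submodule.mem_comap.2 (h ▸ apply_mem_wordOrbit_succ hT hu)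
  · exact (Submodule.ne_bot_iff _).2 ⟨x, self_mem_wordOrbit x k, hx⟩

variable [FiniteDimensional K V]

lemma wordOrbit_eq_top_or_lt_finrank (hS : Algebra.adjoin K S = ⊤) {x : V} (hx : x ≠ 0) (k : ℕ) :
    wordOrbit S x k = ⊤ ∨ k < finrank K (wordOrbit S x k) := by
  induction k with
  | zero =>
    refine Or.inr (Submodule.one_le_finrank_iff.2 ?_)
    exact (Submodule.ne_bot_iff _).2 ⟨x, self_mem_wordOrbit x 0, hx⟩
  | succ k ih =>
    rcases (wordOrbit_mono (S := S) x k.le_succ).eq_or_lt with heq | hlt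
    · exact Or.inl (heq ▸ wordOrbit_eq_top_of_eq_succ hS hx heq)
    · have hrank := Submodule.finrank_lt_finrank_of_lt hlt
      exact ih.imp (fun h ↦ absurd (h ▸ hlt) not_top_lt) (fun h ↦ by lia)

lemma wordOrbit_eq_top (hS : Algebra.adjoin K S = ⊤) {x : V} (hx : x ≠ 0) {k : ℕ}
    (hk : finrank K V ≤ k + 1) : wordOrbit S x k = ⊤ :=
  (wordOrbit_eq_top_or_lt_finrank hS hx k).elim id fun h ↦
    Submodule.eq_top_of_finrank_eq ((Submodule.finrank_le _).antisymm (by lia))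

lemma two_le_finrank_range_of_mem_wordPerp (hS : Algebra.adjoin K S = ⊤) {k : ℕ}
    (hk : finrank K V ≤ k + 1) {X : End K V} (hX : X ∈ wordPerp S k) (hX₀ : X ≠ 0) :
    2 ≤ finrank K (LinearMap.range X) := by
  by_contra! hlt
  obtain ⟨ψ, x, rfl⟩ := exists_eq_smulRight_of_finrank_range_le_one (Nat.le_of_lt_succ hlt)
  have hx : x ≠ 0 := by rintro rfl; simp at hX₀
  have hψ : wordOrbit S x k ≤ LinearMap.ker ψ := by
    rintro _ ⟨T, hT, rfl⟩
    exact (endTraceForm_smulRight T ψ x).symm.trans (mem_wordPerp.1 hX T hT)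
  rw [wordOrbit_eq_top hS hx hk, top_le_iff, LinearMap.ker_eq_top] at hψ
  simp [hψ] at hX₀

lemma exists_mem_two_le_natDegree_minpoly (hS : Algebra.adjoin K S = ⊤)
    (hV : 2 ≤ finrank K V) : ∃ B ∈ S, 2 ≤ (minpoly K B).natDegree := by
  by_contra! hlt
  have : Nontrivial V := nontrivial_of_finrank_pos (R := K) (by lia)
  have hscalar : S ⊆ (⊥ : Subalgebra K (End K V)) := fun B hB ↦ by
    have hB₂ := (minpoly.two_le_natDegree_iff (Algebra.IsIntegral.isIntegral B)).not.1
      (hlt B hB).not_ge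
    exact Algebra.mem_bot.2 (not_not.1 hB₂)
  have hone : finrank K (End K V) = 1 := Subalgebra.bot_eq_top_iff_finrank_eq_one.1 <|
    top_le_iff.1 (hS ▸ Algebra.adjoin_le hscalar)
  rw [finrank_linearMap] at hone
  nlinarith

variable {a : End K V} {k : ℕ}

lemma exists_two_le_finrank_range_inf_ker (hS : Algebra.adjoin K S = ⊤) (ha : a ∈ S)
    (hs : (minpoly K a).Splits) (hk : finrank K V + (minpoly K a).natDegree ≤ k + 2)
    {Z : End K V} (hZ : Z ∈ wordPerp S k) {q : K[X]} (hq : q ∣ minpoly K a)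
    (hqZ : aeval a q * Z ≠ 0) :
    ∃ (f : K[X]) (c : K), q ∣ f ∧ f * (X - C c) ∣ minpoly K a ∧
      2 ≤ finrank K
        (LinearMap.range (aeval a f) ⊓ LinearMap.ker (aeval a (X - C c)) : Submodule K V) := by
  have hm₀ : minpoly K a ≠ 0 := minpoly.ne_zero (Algebra.IsIntegral.isIntegral a)
  obtain ⟨h, hqh⟩ := hq
  have hh : h ∣ minpoly K a := hqh ▸ dvd_mul_left h q
  have hhqZ : aeval a h * (aeval a q * Z) = 0 := by
    rw [← mul_assoc, ← map_mul, mul_comm, ← hqh, minpoly.aeval, zero_mul]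
  obtain ⟨g, c, hdvd, hne, hker⟩ := exists_mul_X_sub_C_dvd_of_aeval_mul_eq_zero
    (hs.of_dvd hm₀ hh) (ne_zero_of_dvd_ne_zero hm₀ hh) hqZ hhqZ
  rw [← mul_assoc, ← map_mul, mul_comm g] at hne
  rw [← mul_assoc (aeval a g), ← map_mul, mul_comm g] at hker
  have hfc : q * g * (X - C c) ∣ minpoly K a := by
    rw [hqh, mul_assoc]
    exact mul_dvd_mul_left q hdvd
  refine ⟨q * g, c, dvd_mul_right q g, hfc, ?_⟩
  have hdeg : (q * g).natDegree + 1 ≤ (minpoly K a).natDegree := by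
    have hqg : q * g ≠ 0 := left_ne_zero_of_mul (ne_zero_of_dvd_ne_zero hm₀ hfc)
    rw [← natDegree_X_sub_C c, ← natDegree_mul hqg (X_sub_C_ne_zero c)]
    exact natDegree_le_of_dvd hfc hm₀
  have hmn := natDegree_minpoly_le_finrank a
  have hperp : aeval a (q * g) * Z ∈ wordPerp S (k - (q * g).natDegree) :=
    mul_mem_wordPerp (aeval_mem_wordSpan ha _) (wordPerp_antitone (by lia) hZ)
  refine (two_le_finrank_range_of_mem_wordPerp hS (by lia) hperp hne).trans
    (Submodule.finrank_mono (le_inf (LinearMap.range_comp_le_range _ _) ?_))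
  exact LinearMap.range_le_ker_iff.2 hker

lemma natDegree_minpoly_lt_finrank_of_mem_wordPerp (hS : Algebra.adjoin K S = ⊤) (ha : a ∈ S)
    (hs : (minpoly K a).Splits) (hk : finrank K V + (minpoly K a).natDegree ≤ k + 2)
    {Y : End K V} (hY : Y ∈ wordPerp S k) (hY₀ : Y ≠ 0) :
    (minpoly K a).natDegree < finrank K V := by
  obtain ⟨f, c, -, hfc, htwo⟩ :=
    exists_two_le_finrank_range_inf_ker hS ha hs hk hY (one_dvd _) (by simpa using hY₀)
  have hrank := finrank_range_aeval_mul_add_natDegree_le (f := 1) (g := f)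
    (by simpa using (dvd_mul_right f _).trans hfc)
  have hexcess := natDegree_minpoly_add_finrank_range_inf_ker_le hfc
  have hdeg := natDegree_mul_le (p := f) (q := X - C c)
  have hV := Submodule.finrank_le (LinearMap.range (aeval a (1 : K[X])))
  rw [one_mul] at hrank
  rw [natDegree_X_sub_C] at hdeg
  lia

lemma exists_two_le_finrank_ker (hS : Algebra.adjoin K S = ⊤) (ha : a ∈ S)
    (hs : (minpoly K a).Splits) (hk : finrank K V + (minpoly K a).natDegree ≤ k + 2)
    {Y : End K V} (hY : Y ∈ wordPerp S k) (hY₀ : Y ≠ 0) :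
    ∃ c : K, X - C c ∣ minpoly K a ∧ 2 ≤ finrank K (LinearMap.ker (aeval a (X - C c))) := by
  obtain ⟨f, c, -, hfc, htwo⟩ :=
    exists_two_le_finrank_range_inf_ker hS ha hs hk hY (one_dvd _) (by simpa using hY₀)
  exact ⟨c, (dvd_mul_left _ f).trans hfc, htwo.trans (Submodule.finrank_mono inf_le_right)⟩

lemma finrank_ker_aeval_X_sub_C_le (a : End K V) {c : K} (hc : X - C c ∣ minpoly K a) :
    (minpoly K a).natDegree + finrank K (LinearMap.ker (aeval a (X - C c))) ≤ finrank K V + 1 := by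
  have hexcess := natDegree_minpoly_add_finrank_range_inf_ker_le ((one_mul (X - C c)).dvd.trans hc)
  rwa [map_one, End.one_eq_id, LinearMap.range_id, top_inf_eq, finrank_top, one_mul,
    natDegree_X_sub_C] at hexcess

-- Otherwise the rank drops by at least two both at the factor `X - C c` and at a later one, which
-- leaves too few dimensions for the remaining factors.
lemma aeval_X_sub_C_mul_eq_zero_of_mem_wordPerp (hS : Algebra.adjoin K S = ⊤) (ha : a ∈ S)
    (hs : (minpoly K a).Splits) (hdeg : finrank K V ≤ (minpoly K a).natDegree + 1)
    (hk : finrank K V + (minpoly K a).natDegree ≤ k + 2) {c : K} (hc : X - C c ∣ minpoly K a)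
    (hker : 2 ≤ finrank K (LinearMap.ker (aeval a (X - C c)))) {Z : End K V}
    (hZ : Z ∈ wordPerp S k) : aeval a (X - C c) * Z = 0 := by
  by_contra hne
  obtain ⟨f, c', ⟨g, rfl⟩, hfc, htwo⟩ :=
    exists_two_le_finrank_range_inf_ker hS ha hs hk hZ hc hne
  have hrank := finrank_range_aeval_mul_add_natDegree_le ((dvd_mul_right _ _).trans hfc)
  have hexcess := natDegree_minpoly_add_finrank_range_inf_ker_le hfc
  have hdeg₁ := natDegree_mul_le (p := (X - C c) * g) (q := X - C c')
  have hdeg₂ := natDegree_mul_le (p := X - C c) (q := g)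
  have hV := LinearMap.finrank_range_add_finrank_ker (aeval a (X - C c))
  rw [natDegree_X_sub_C] at hdeg₁ hdeg₂
  lia

lemma finrank_eq_two_of_mem_wordPerp (hS : Algebra.adjoin K S = ⊤) (ha : a ∈ S)
    (hs : (minpoly K a).Splits) (hdeg : finrank K V ≤ (minpoly K a).natDegree + 1)
    (hk : finrank K V + (minpoly K a).natDegree ≤ k + 2) {Y : End K V}
    (hY : Y ∈ wordPerp S (k + 1)) (hY₀ : Y ≠ 0) : finrank K V = 2 := by
  have hYk : Y ∈ wordPerp S k := wordPerp_antitone k.le_succ hY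
  obtain ⟨c, hc, hker⟩ := exists_two_le_finrank_ker hS ha hs hk hYk hY₀
  have hle {Z : End K V} (hZ : Z ∈ wordPerp S k) :
      LinearMap.range Z ≤ LinearMap.ker (aeval a (X - C c)) := LinearMap.range_le_ker_iff.2 <|
    aeval_X_sub_C_mul_eq_zero_of_mem_wordPerp hS ha hs hdeg hk hc hker hZ
  have htwo : 2 ≤ finrank K (LinearMap.range Y) :=
    two_le_finrank_range_of_mem_wordPerp hS (by lia) hY hY₀
  have hker' := finrank_ker_aeval_X_sub_C_le a hc
  have hrange : LinearMap.range Y = LinearMap.ker (aeval a (X - C c)) :=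
    Submodule.eq_of_le_of_finrank_le (hle hYk) (by lia)
  have hrank : finrank K (LinearMap.range Y) = 2 := by
    rw [hrange]
    lia
  have hinv (B : End K V) (hB : B ∈ S) : LinearMap.range Y ∈ B.invtSubmodule := by
    rintro _ ⟨v, rfl⟩
    exact hrange ▸ hle (mul_mem_wordPerp (mem_wordSpan_one hB) hY) ⟨v, rfl⟩
  rcases eq_bot_or_eq_top_of_forall_mem_invtSubmodule hS hinv with hbot | htop
  · exact absurd (LinearMap.range_eq_bot.1 hbot) hY₀
  · rw [← hrank, htop, finrank_top]

theorem wordSpan_eq_top_of_isAlgClosed [IsAlgClosed K] (hS : Algebra.adjoin K S = ⊤) (ha : a ∈ S)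
    (hdeg : finrank K V ≤ (minpoly K a).natDegree + 1) :
    wordSpan K S (2 * finrank K V - 2) = ⊤ := by
  refine eq_top_of_orthogonal_endTraceForm_eq_bot (Submodule.eq_bot_iff _ |>.2 fun Y hY ↦ ?_)
  by_contra hY₀
  have hlt {b : End K V} (hb : b ∈ S) : (minpoly K b).natDegree < finrank K V := by
    have hle := natDegree_minpoly_le_finrank b
    exact natDegree_minpoly_lt_finrank_of_mem_wordPerp hS hb (IsAlgClosed.splits _) (by lia) hY hY₀
  have : Nontrivial (End K V) := nontrivial_of_ne Y 0 hY₀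
  have hpos := minpoly.natDegree_pos (Algebra.IsIntegral.isIntegral (R := K) a)
  have hlt_a := hlt ha
  have hV : finrank K V = 2 := finrank_eq_two_of_mem_wordPerp (k := 2 * finrank K V - 3) hS ha
    (IsAlgClosed.splits _) hdeg (by lia) (wordPerp_antitone (by lia) hY) hY₀
  obtain ⟨B, hB, hB₂⟩ := exists_mem_two_le_natDegree_minpoly hS hV.ge
  exact (hlt hB).not_ge (hV ▸ hB₂)

end Operators

theorem wordSpan_matrix_eq_top_of_isAlgClosed {K ι : Type*} [Field K] [IsAlgClosed K] [Fintype ι]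
    [DecidableEq ι] {S : Set (Matrix ι ι K)} (hS : Algebra.adjoin K S = ⊤) {M : Matrix ι ι K}
    (hM : M ∈ S) (hdeg : Fintype.card ι ≤ (minpoly K M).natDegree + 1) :
    wordSpan K S (2 * Fintype.card ι - 2) = ⊤ := by
  let e : Matrix ι ι K ≃ₐ[K] End K (ι → K) := Matrix.toLinAlgEquiv'
  have he : IsBaseChange K e.toAlgHom.toLinearMap := IsBaseChange.ofEquiv e.toLinearEquiv
  have htop := wordSpan_eq_top_of_isAlgClosed (adjoin_image_eq_top_of_isBaseChange he hS)
    (Set.mem_image_of_mem _ hM) (by simpa [minpoly.algEquiv_eq] using hdeg)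
  rw [finrank_fintype_fun_eq_card] at htop
  exact wordSpan_eq_top_of_image he htop

theorem length_le_of_minpoly_deg_pred_mem_general {F ι : Type*} [Field F] [Fintype ι]
    [DecidableEq ι] {S : Set (Matrix ι ι F)} (hgen : IsGeneratingSystem F S)
    (hA : ∃ M ∈ S, Fintype.card ι ≤ (minpoly F M).natDegree + 1) :
    genLength F S ≤ 2 * Fintype.card ι - 2 := by
  obtain ⟨M, hM, hdeg⟩ := hA
  have hbase := isBaseChange_ofId_mapMatrix F (AlgebraicClosure F) ι
  have hminpoly := natDegree_minpoly_le_of_isBaseChange hbase M (Algebra.IsIntegral.isIntegral _)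
  refine Nat.sInf_le (wordSpan_eq_top_of_image hbase ?_)
  exact wordSpan_matrix_eq_top_of_isAlgClosed
    (adjoin_image_eq_top_of_isBaseChange hbase hgen.adjoin_eq_top) (Set.mem_image_of_mem _ hM)
    (hdeg.trans (Nat.succ_le_succ hminpoly))

theorem length_le_of_minpoly_deg_pred_mem
    (F : Type*) [Field F] (n : ℕ) (hn : 2 ≤ n)
    (S : Finset (Matrix (Fin n) (Fin n) F))
    (hgen : IsGeneratingSystem F (S : Set (Matrix (Fin n) (Fin n) F)))
    (hA : ∃ M ∈ S, (minpoly F M).natDegree = n - 1) :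
    genLength F (S : Set (Matrix (Fin n) (Fin n) F)) ≤ 2 * n - 2 := by
  obtain ⟨M, hM, hdeg⟩ := hA
  simpa using length_le_of_minpoly_deg_pred_mem_general hgen ⟨M, hM, by simp [hdeg]; lia⟩
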